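/- For every φ = (α, y) ∈ 𝓑 and every t ∈ ℝ, the second derivative of i_φ at t exists and equals i''_φ(t) = (1/(16π)) ∫_{ℝ³} { |∂α|² + (2α² |∂Y(t)|² − 4α ∂Y(t)·∂y + |∂y|²) X(t)⁻² } dμ. -/

import Mathlib

/-!
The mass functional along the segment `(v₀ + tα, Y₀ + ty)` depends on `t` in a completely explicit way:
since `ρ⁻⁴ e^{-2v(t)} = e^{-2tα} X₀⁻²`, its integrand, including the factor `ρ`, is
`P + tQ + t²R + e^{-2tα} (U + tV + t²W)`,
where `P, Q, R` are built from `∂v₀` and `∂α`, and `U, V, W` from `∂Y₀ / X₀` and `∂y / X₀`.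

All six coefficients are integrable on the half-plane `{ρ > 0}`. With `m = √|J|`, the explicit form of
the extreme Kerr data gives `|∂v₀|, |∂Y₀| / X₀ ≤ C / (r (r + m))` (`abs_fderiv_v0_le`,
`abs_fderiv_Y0_div_le`), while the norm of 𝓑 gives `|∂α|, |∂y| / X₀ ≤ C σ^{β-1}`, the second bound
using that `y` vanishes near the axis (`abs_le_of_wFn_le`, `abs_inv_X0_mul_le`). The squares of both
majorants are integrable against `ρ dρ dz` (`integrableOn_kernel`, `integrableOn_weight`), hence so
are all products (`integrableOn_mul_of_le`).

As `α` is bounded, dominated convergence allows to differentiate `∫ e^{-2tα} (U + tV + t²W)` under the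
integral sign, and the derivative is an integral of the same shape with other integrable
coefficients (`hasDerivAt_integral_exp_poly`). Applying this twice gives the second derivative, and
the integrand obtained is pointwise twice the one in the claim.
-/


open Real MeasureTheory

noncomputable section

/-- Partial derivative with respect to ρ (the first coordinate) of an
axisymmetric function, viewed as a function of (ρ, z). -/
def pdR (f : ℝ × ℝ → ℝ) (p : ℝ × ℝ) : ℝ := fderiv ℝ f p (1, 0)

/-- Partial derivative with respect to z (the second coordinate). -/
def pdZ (f : ℝ × ℝ → ℝ) (p : ℝ × ℝ) : ℝ := fderiv ℝ f p (0, 1)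

/-- |∂f|² = f_{,ρ}² + f_{,z}². -/
def gradSq (f : ℝ × ℝ → ℝ) (p : ℝ × ℝ) : ℝ := (pdR f p) ^ 2 + (pdZ f p) ^ 2

/-- ∂f·∂g = f_{,ρ} g_{,ρ} + f_{,z} g_{,z}. -/
def gradDot (f g : ℝ × ℝ → ℝ) (p : ℝ × ℝ) : ℝ :=
  pdR f p * pdR g p + pdZ f p * pdZ g p

/-- The flat Laplacian of ℝ³ acting on axisymmetric functions:
Δf = f_{,ρρ} + ρ⁻¹ f_{,ρ} + f_{,zz}. -/
def lap (f : ℝ × ℝ → ℝ) (p : ℝ × ℝ) : ℝ :=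
  pdR (pdR f) p + (p.1)⁻¹ * pdR f p + pdZ (pdZ f) p

/-- The flat divergence of ℝ³ of an axisymmetric vector field (Wρ, Wz):
div W = ρ⁻¹ (ρ Wρ)_{,ρ} + Wz_{,z} = Wρ_{,ρ} + ρ⁻¹ Wρ + Wz_{,z}. -/
def divg (Wr Wz : ℝ × ℝ → ℝ) (p : ℝ × ℝ) : ℝ :=
  pdR Wr p + (p.1)⁻¹ * Wr p + pdZ Wz p

/-- The half-plane {ρ > 0} of (ρ, z), representing ℝ³ in cylindrical coordinates. -/
def HP : Set (ℝ × ℝ) := {p | 0 < p.1}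

/-- Ω_{ρ₀} = {ρ > ρ₀}, the exterior of the solid cylinder of radius ρ₀. -/
def Om (ρ₀ : ℝ) : Set (ℝ × ℝ) := {p | ρ₀ < p.1}

/-- ∫_{ℝ³} h dμ for an axisymmetric integrand h, where dμ = ρ dρ dz dφ. -/
def intR3 (h : ℝ × ℝ → ℝ) : ℝ := (2 * π) * ∫ p in HP, h p * p.1

/-- ∫_{Ω_{ρ₀}} h dμ for an axisymmetric integrand h. -/
def intOm (ρ₀ : ℝ) (h : ℝ × ℝ → ℝ) : ℝ := (2 * π) * ∫ p in Om ρ₀, h p * p.1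

/-- The mass functional M(v, Y) = (1/(32π)) ∫_{ℝ³} (|∂v|² + ρ⁻⁴ e^{−2v} |∂Y|²) dμ. -/
def MF (v Y : ℝ × ℝ → ℝ) : ℝ :=
  (1 / (32 * π)) *
    intR3 (fun p => gradSq v p + (p.1 ^ 4)⁻¹ * Real.exp (-2 * v p) * gradSq Y p)

/-- r = √(ρ² + z²). -/
def rr (p : ℝ × ℝ) : ℝ := Real.sqrt (p.1 ^ 2 + p.2 ^ 2)

/-- cos θ = z / r. -/
def cosT (p : ℝ × ℝ) : ℝ := p.2 / rr p

/-- sin²θ = ρ² / r². -/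
def sin2T (p : ℝ × ℝ) : ℝ := p.1 ^ 2 / (rr p) ^ 2

/-- r̃ = r + √|J|. -/
def rt (J : ℝ) (p : ℝ × ℝ) : ℝ := rr p + Real.sqrt |J|

/-- Σ = r̃² + |J| cos²θ. -/
def Sg (J : ℝ) (p : ℝ × ℝ) : ℝ := (rt J p) ^ 2 + |J| * (cosT p) ^ 2

/-- The extreme Kerr potential Y₀. -/
def Y0 (J : ℝ) (p : ℝ × ℝ) : ℝ :=
  2 * J * ((cosT p) ^ 3 - 3 * cosT p) - 2 * J ^ 2 * cosT p * (sin2T p) ^ 2 / Sg J p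

/-- The extreme Kerr Killing norm X₀. -/
def X0 (J : ℝ) (p : ℝ × ℝ) : ℝ :=
  (((rt J p) ^ 2 + |J|) ^ 2 - (rr p) ^ 2 * |J| * sin2T p) * sin2T p / Sg J p

/-- The extreme Kerr function v₀ = ln X₀ − 2 ln ρ, so that X₀ = ρ² e^{v₀}. -/
def v0 (J : ℝ) (p : ℝ × ℝ) : ℝ := Real.log (X0 J p) - 2 * Real.log p.1

/-- σ = √(r² + 1). -/
def sgm (p : ℝ × ℝ) : ℝ := Real.sqrt ((rr p) ^ 2 + 1)

/-- The pointwise weighted C¹ quantity σ^{−β}|f| + σ^{−β+1}|∂f|. -/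
def wFn (β : ℝ) (f : ℝ × ℝ → ℝ) (p : ℝ × ℝ) : ℝ :=
  sgm p ^ (-β) * |f p| + sgm p ^ (-β + 1) * Real.sqrt (gradSq f p)

/-- The weighted norm ‖f‖_{C¹_β(Ω)} = sup_Ω (σ^{−β}|f| + σ^{−β+1}|∂f|). -/
def C1norm (β : ℝ) (Ω : Set (ℝ × ℝ)) (f : ℝ × ℝ → ℝ) : ℝ :=
  sSup (wFn β f '' Ω)

/-- The Banach space 𝓑: pairs φ = (α, y) of axisymmetric C¹ functions with
y ≡ 0 on {ρ ≤ ρ₀} and finite norm ‖φ‖_𝓑 = ‖α‖_{C¹_β(ℝ³)} + ‖y‖_{C¹_β(Ω_{ρ₀})}. -/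
structure Bsp (ρ₀ β : ℝ) where
  a : ℝ × ℝ → ℝ
  y : ℝ × ℝ → ℝ
  ha : ContDiff ℝ 1 a
  hy : ContDiff ℝ 1 y
  hy0 : ∀ p : ℝ × ℝ, p.1 ≤ ρ₀ → y p = 0
  hba : BddAbove (wFn β a '' HP)
  hby : BddAbove (wFn β y '' Om ρ₀)

/-- The norm of 𝓑. -/
def Bnorm (ρ₀ β : ℝ) (φ : Bsp ρ₀ β) : ℝ :=
  C1norm β HP φ.a + C1norm β (Om ρ₀) φ.y

/-- i_φ(t) = M(u₀ + tφ) = M(v₀ + tα, Y₀ + ty). -/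
def iF (J ρ₀ β : ℝ) (φ : Bsp ρ₀ β) (t : ℝ) : ℝ :=
  MF (fun p => v0 J p + t * φ.a p) (fun p => Y0 J p + t * φ.y p)

/-- ‖α‖²_{H₁} = ∫_{ℝ³} |∂α|² dμ + ∫_{ℝ³} α² r⁻² dμ. -/
def H1sq (a : ℝ × ℝ → ℝ) : ℝ :=
  intR3 (fun p => gradSq a p) + intR3 (fun p => (a p) ^ 2 * ((rr p) ^ 2)⁻¹)

/-- ‖y‖²_{H₂} = ∫_{Ω_{ρ₀}} |∂y|² ρ⁻⁴ dμ + ∫_{Ω_{ρ₀}} y² ρ⁻⁶ dμ. -/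
def H2sq (ρ₀ : ℝ) (y : ℝ × ℝ → ℝ) : ℝ :=
  intOm ρ₀ (fun p => gradSq y p * (p.1 ^ 4)⁻¹) +
    intOm ρ₀ (fun p => (y p) ^ 2 * (p.1 ^ 6)⁻¹)

/-- ‖φ‖²_𝓗 = ‖α‖²_{H₁} + ‖y‖²_{H₂}. -/
def Hsq (ρ₀ β : ℝ) (φ : Bsp ρ₀ β) : ℝ := H1sq φ.a + H2sq ρ₀ φ.y

/-! ### Integrals of polynomials in the parameter times an exponential -/

lemma integrable_exp_mul {α f : ℝ × ℝ → ℝ} {μ : Measure (ℝ × ℝ)} {C : ℝ}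
    (hα : Measurable α) (hC : ∀ᵐ p ∂μ, |α p| ≤ C) (hf : Integrable f μ) (s : ℝ) :
    Integrable (fun p => Real.exp (-2 * s * α p) * f p) μ := by
  refine hf.bdd_mul (c := Real.exp (2 * |s| * C)) (by fun_prop) ?_
  filter_upwards [hC] with p hp
  rw [Real.norm_eq_abs, Real.abs_exp, Real.exp_le_exp]
  calc -2 * s * α p ≤ |-2 * s * α p| := le_abs_self _
    _ = 2 * |s| * |α p| := by rw [abs_mul, abs_mul]; norm_num
    _ ≤ _ := by gcongr

lemma integrable_mul_left {α f : ℝ × ℝ → ℝ} {μ : Measure (ℝ × ℝ)} {C : ℝ}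
    (hα : Measurable α) (hC : ∀ᵐ p ∂μ, |α p| ≤ C) (hf : Integrable f μ) :
    Integrable (fun p => -2 * α p * f p) μ := by
  refine hf.bdd_mul (c := 2 * C) (hα.aestronglyMeasurable.const_mul (-2)) ?_
  filter_upwards [hC] with p hp
  rw [norm_mul, Real.norm_eq_abs, Real.norm_eq_abs]
  norm_num
  exact hp

/-- Differentiation under the integral sign for
`∫ exp (-2sα) (U + sV + s²W)`. The derivative is again an integral of this shape, with new
integrable coefficients, so that the lemma can be iterated. -/
lemma hasDerivAt_integral_exp_poly {α U V W : ℝ × ℝ → ℝ} {μ : Measure (ℝ × ℝ)} {C : ℝ}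
    (hα : Measurable α) (hC : ∀ᵐ p ∂μ, |α p| ≤ C)
    (hU : Integrable U μ) (hV : Integrable V μ) (hW : Integrable W μ) (t : ℝ) :
    HasDerivAt (fun s => ∫ p, Real.exp (-2 * s * α p) * (U p + s * V p + s ^ 2 * W p) ∂μ)
      (∫ p, Real.exp (-2 * t * α p) * ((-2 * α p * U p + V p) +
        t * (-2 * α p * V p + 2 * W p) + t ^ 2 * (-2 * α p * W p)) ∂μ) t := by
  have hmul : ∀ {f : ℝ × ℝ → ℝ}, Integrable f μ → Integrable (fun p => -2 * α p * f p) μ :=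
    fun hf => integrable_mul_left hα hC hf
  have hexp : ∀ s : ℝ, ∀ {f : ℝ × ℝ → ℝ}, Integrable f μ →
      Integrable (fun p => Real.exp (-2 * s * α p) * f p) μ :=
    fun s _ hf => integrable_exp_mul hα hC hf s
  have hU' : Integrable (fun p => -2 * α p * U p + V p) μ := (hmul hU).add hV
  have hV' : Integrable (fun p => -2 * α p * V p + 2 * W p) μ := (hmul hV).add (hW.const_mul 2)
  have hW' := hmul hW
  have key := hasDerivAt_integral_of_dominated_loc_of_deriv_le (μ := μ) (𝕜 := ℝ) (x₀ := t)
    (s := Metric.ball t 1)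
    (F := fun s p => Real.exp (-2 * s * α p) * (U p + s * V p + s ^ 2 * W p))
    (F' := fun s p => Real.exp (-2 * s * α p) * ((-2 * α p * U p + V p) +
        s * (-2 * α p * V p + 2 * W p) + s ^ 2 * (-2 * α p * W p)))
    (bound := fun p => Real.exp (2 * (|t| + 1) * C) * (|-2 * α p * U p + V p| +
        (|t| + 1) * |-2 * α p * V p + 2 * W p| + (|t| + 1) ^ 2 * |-2 * α p * W p|))
    (Metric.ball_mem_nhds t one_pos) ?_ ?_ ?_ ?_ ?_ ?_
  · exact key.2
  · refine Filter.Eventually.of_forall fun s => ?_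
    exact (hexp s ((hU.add (hV.const_mul s)).add (hW.const_mul (s ^ 2)))).1
  · exact hexp t ((hU.add (hV.const_mul t)).add (hW.const_mul (t ^ 2)))
  · exact (hexp t ((hU'.add (hV'.const_mul t)).add (hW'.const_mul (t ^ 2)))).1
  · filter_upwards [hC] with p hp s hs
    have hs' : |s| ≤ |t| + 1 := by
      have h1 : |s - t| < 1 := by simpa [Real.dist_eq] using hs
      have h2 := abs_sub_abs_le_abs_sub s t
      linarith
    rw [norm_mul, Real.norm_eq_abs, Real.norm_eq_abs, Real.abs_exp]
    have h0 : 0 ≤ C := (abs_nonneg _).trans hp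
    refine mul_le_mul (Real.exp_le_exp.2 ?_) ?_ (abs_nonneg _) (Real.exp_nonneg _)
    · calc -2 * s * α p ≤ |-2 * s * α p| := le_abs_self _
        _ = 2 * |s| * |α p| := by rw [abs_mul, abs_mul]; norm_num
        _ ≤ _ := by gcongr
    · refine (abs_add_le _ _).trans (add_le_add ((abs_add_le _ _).trans (add_le_add le_rfl ?_)) ?_)
      · rw [abs_mul]; gcongr
      · rw [abs_mul, abs_pow]; gcongr
  · exact ((hU'.abs.add (hV'.abs.const_mul _)).add (hW'.abs.const_mul _)).const_mul _
  · refine Filter.Eventually.of_forall fun p s _ => ?_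
    have h1 : HasDerivAt (fun s : ℝ => Real.exp (-2 * s * α p))
        (Real.exp (-2 * s * α p) * (-2 * α p)) s := by
      have := (((hasDerivAt_id s).const_mul (-2)).mul_const (α p)).exp
      simpa using this
    have h2 : HasDerivAt (fun s : ℝ => U p + s * V p + s ^ 2 * W p) (V p + 2 * s * W p) s := by
      have := (((hasDerivAt_id s).mul_const (V p)).const_add (U p)).add
        (((hasDerivAt_id s).pow 2).mul_const (W p))
      refine HasDerivAt.congr_deriv this ?_
      simp
    refine (h1.mul h2).congr_deriv ?_
    ring

/-! ### Integrability of the two weights on the half-plane -/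

/-- One-dimensional factor used to bound the singular weight: integrable at `0` because
`-1/2 > -1`, and at infinity because `-1/2 - 1 < -1`. -/
lemma integrable_abs_rpow_div {m : ℝ} (hm : 0 < m) :
    Integrable (fun x : ℝ => |x| ^ (-(1 / 2) : ℝ) * (|x| + m)⁻¹) := by
  set h : ℝ → ℝ := fun x => |x| ^ (-(1 / 2) : ℝ) * (|x| + m)⁻¹ with hh
  have hmeas : Measurable h := by fun_prop
  have h1 : IntegrableOn h (Set.Ioc 0 1) := by
    have : IntegrableOn (fun x : ℝ => x ^ (-(1 / 2) : ℝ) * m⁻¹) (Set.Ioc 0 1) := by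
      rw [← intervalIntegrable_iff_integrableOn_Ioc_of_le zero_le_one]
      exact (intervalIntegral.intervalIntegrable_rpow' (by norm_num)).mul_const _
    refine this.mono' hmeas.aestronglyMeasurable ?_
    refine (ae_restrict_iff' measurableSet_Ioc).2 (Filter.Eventually.of_forall fun x hx => ?_)
    have hx0 : 0 < x := hx.1
    simp only [hh]
    rw [Real.norm_eq_abs, abs_of_nonneg (by positivity), abs_of_pos hx0]
    gcongr
    linarith
  have h2 : IntegrableOn h (Set.Ioi 1) := by
    have : IntegrableOn (fun x : ℝ => x ^ (-(3 / 2) : ℝ)) (Set.Ioi 1) :=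
      integrableOn_Ioi_rpow_of_lt (by norm_num) one_pos
    refine this.mono' hmeas.aestronglyMeasurable ?_
    refine (ae_restrict_iff' measurableSet_Ioi).2 (Filter.Eventually.of_forall fun x hx => ?_)
    have hx0 : 0 < x := one_pos.trans hx
    simp only [hh]
    rw [Real.norm_eq_abs, abs_of_nonneg (by positivity), abs_of_pos hx0]
    have e : x ^ (-(3 / 2) : ℝ) = x ^ (-(1 / 2) : ℝ) * x⁻¹ := by
      rw [← Real.rpow_neg_one x, ← Real.rpow_add hx0]; norm_num
    rw [e]
    gcongr
    linarith
  have h3 : IntegrableOn h (Set.Ioi 0) := by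
    rw [← Set.Ioc_union_Ioi_eq_Ioi (zero_le_one (α := ℝ))]
    exact h1.union h2
  have h4 : Integrable ((Set.Ioi 0).indicator h) := (integrable_indicator_iff measurableSet_Ioi).2 h3
  refine (h4.add h4.comp_neg).congr (Filter.Eventually.of_forall fun x => ?_)
  rcases lt_trichotomy x 0 with hx | hx | hx
  · simp [Set.indicator, hx, hx.le, hh]
  · subst hx
    simp [Set.indicator, hh]
  · simp [Set.indicator, hx, hx.le, hh]

lemma rr_sq (p : ℝ × ℝ) : rr p ^ 2 = p.1 ^ 2 + p.2 ^ 2 := Real.sq_sqrt (by positivity)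

lemma rr_nonneg (p : ℝ × ℝ) : 0 ≤ rr p := Real.sqrt_nonneg _

lemma rr_pos {p : ℝ × ℝ} (hp : 0 < p.1) : 0 < rr p := Real.sqrt_pos.2 (by positivity)

lemma abs_fst_le_rr (p : ℝ × ℝ) : |p.1| ≤ rr p :=
  Real.abs_le_sqrt (by nlinarith [sq_nonneg p.2])

lemma abs_snd_le_rr (p : ℝ × ℝ) : |p.2| ≤ rr p :=
  Real.abs_le_sqrt (by nlinarith [sq_nonneg p.1])

lemma measurable_rr : Measurable rr := by unfold rr; fun_prop

lemma measurableSet_HP : MeasurableSet HP := measurableSet_lt measurable_const measurable_fst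

/-- The weight `r⁻² (r + m)⁻² ρ` is integrable on the half-plane. As `r` dominates both `ρ` and
`|z|`, and `ρ ≤ r`, it is at most `g(ρ) g(z)` with `g(x) = |x|^(-1/2) (|x| + m)⁻¹`. -/
lemma integrableOn_kernel {m : ℝ} (hm : 0 < m) :
    IntegrableOn (fun p => (rr p * (rr p + m))⁻¹ ^ 2 * p.1) HP := by
  have hprod : Integrable (fun p : ℝ × ℝ => (|p.1| ^ (-(1 / 2) : ℝ) * (|p.1| + m)⁻¹) *
      (|p.2| ^ (-(1 / 2) : ℝ) * (|p.2| + m)⁻¹)) :=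
    (integrable_abs_rpow_div hm).mul_prod (integrable_abs_rpow_div hm)
  have hne : ∀ᵐ p : ℝ × ℝ, p.2 ≠ 0 := by
    exact Measure.quasiMeasurePreserving_snd.ae (Measure.ae_ne volume 0)
  have hm1 := measurable_rr
  refine (hprod.integrableOn (s := HP)).mono' (by fun_prop) ?_
  filter_upwards [ae_restrict_mem measurableSet_HP, ae_restrict_of_ae hne] with p hp hz
  have hp : 0 < p.1 := hp
  have hr := rr_pos hp
  have h1 := abs_fst_le_rr p
  have h2 := abs_snd_le_rr p
  have hz' : 0 < |p.2| := abs_pos.2 hz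
  rw [Real.norm_eq_abs, abs_of_nonneg (by positivity)]
  rw [abs_of_pos hp] at *
  have e : rr p * ((rr p * (rr p + m))⁻¹ ^ 2 * p.1) ≤ (rr p + m)⁻¹ * (rr p + m)⁻¹ := by
    have : rr p * ((rr p * (rr p + m))⁻¹ ^ 2 * p.1) =
      (p.1 / rr p) * ((rr p + m)⁻¹ * (rr p + m)⁻¹) := by field_simp
    rw [this]
    exact mul_le_of_le_one_left (by positivity) ((div_le_one hr).2 h1)
  have e2 : (rr p)⁻¹ = rr p ^ (-(1 / 2) : ℝ) * rr p ^ (-(1 / 2) : ℝ) := by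
    rw [← Real.rpow_add hr, ← Real.rpow_neg_one]; norm_num
  calc (rr p * (rr p + m))⁻¹ ^ 2 * p.1
      = (rr p)⁻¹ * (rr p * ((rr p * (rr p + m))⁻¹ ^ 2 * p.1)) := by field_simp
    _ ≤ (rr p)⁻¹ * ((rr p + m)⁻¹ * (rr p + m)⁻¹) := by gcongr
    _ = (rr p ^ (-(1 / 2) : ℝ) * (rr p + m)⁻¹) * (rr p ^ (-(1 / 2) : ℝ) * (rr p + m)⁻¹) := by
        rw [e2]; ring
    _ ≤ _ := by
        have a1 : rr p ^ (-(1 / 2) : ℝ) ≤ p.1 ^ (-(1 / 2) : ℝ) :=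
          Real.rpow_le_rpow_of_nonpos hp h1 (by norm_num)
        have a2 : rr p ^ (-(1 / 2) : ℝ) ≤ |p.2| ^ (-(1 / 2) : ℝ) :=
          Real.rpow_le_rpow_of_nonpos hz' h2 (by norm_num)
        gcongr

lemma one_le_sgm (p : ℝ × ℝ) : 1 ≤ sgm p := by
  unfold sgm
  rw [Real.one_le_sqrt]
  nlinarith [sq_nonneg (rr p)]

lemma measurable_sgm : Measurable sgm := by
  have := measurable_rr
  unfold sgm; fun_prop

/-- The weight `σ^(2β - 2) ρ` is at most `σ^(2β - 1)`, which is integrable on the plane exactly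
because `β < -1/2`. -/
lemma integrableOn_weight {β : ℝ} (hβ : β < -(1 / 2)) :
    IntegrableOn (fun p => (sgm p ^ (β - 1)) ^ 2 * p.1) HP := by
  have hj : Integrable (fun p : ℝ × ℝ => (1 + ‖p‖) ^ (-(1 - 2 * β))) := by
    apply integrable_one_add_norm
    simp
    linarith
  have hm1 := measurable_sgm
  refine ((hj.const_mul (2 ^ (1 - 2 * β))).integrableOn (s := HP)).mono'
    (Measurable.aestronglyMeasurable (by fun_prop)) ?_
  filter_upwards [ae_restrict_mem measurableSet_HP] with p hp
  have hp : 0 < p.1 := hp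
  have hs : 0 < sgm p := one_pos.trans_le (one_le_sgm p)
  rw [Real.norm_eq_abs, abs_of_nonneg (by positivity)]
  have hrs : rr p ≤ sgm p := Real.le_sqrt_of_sq_le (by linarith)
  have h1 : p.1 ≤ sgm p := (le_abs_self _).trans ((abs_fst_le_rr p).trans hrs)
  have h2 : ‖p‖ ≤ sgm p := by
    rw [Prod.norm_def]
    exact max_le ((abs_fst_le_rr p).trans hrs) ((abs_snd_le_rr p).trans hrs)
  have h3 : (1 + ‖p‖) / 2 ≤ sgm p := by linarith [one_le_sgm p]
  calc (sgm p ^ (β - 1)) ^ 2 * p.1 ≤ (sgm p ^ (β - 1)) ^ 2 * sgm p := by gcongr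
    _ = sgm p ^ (-(1 - 2 * β)) := by
        rw [← Real.rpow_natCast, ← Real.rpow_mul hs.le]
        nth_rewrite 2 [← Real.rpow_one (sgm p)]
        rw [← Real.rpow_add hs]
        congr 1; push_cast; ring
    _ ≤ ((1 + ‖p‖) / 2) ^ (-(1 - 2 * β)) :=
        Real.rpow_le_rpow_of_nonpos (by positivity) h3 (by linarith)
    _ = _ := by
        rw [Real.div_rpow (by positivity) (by norm_num), Real.rpow_neg (by norm_num : (0:ℝ) ≤ 2)]
        field_simp

/-- A common pointwise majorant, up to constants, of the gradients of `v₀` and `α` and of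
`∂Y₀ / X₀`, `∂y / X₀`. The first term is the decay of extreme Kerr data of parameter `m = √|J|`, the
second one the decay prescribed by the norm of 𝓑. -/
def maj (m β : ℝ) (p : ℝ × ℝ) : ℝ := (rr p * (rr p + m))⁻¹ + sgm p ^ (β - 1)

/-- The product of two fields, each of which is `O(maj)`, is integrable against `ρ dρ dz`. -/
lemma integrableOn_mul_of_le {m β C D : ℝ} (hm : 0 < m) (hβ : β < -(1 / 2)) {f g : ℝ × ℝ → ℝ}
    (hf : Measurable f) (hg : Measurable g)
    (hfC : ∀ p ∈ HP, |f p| ≤ C * maj m β p) (hgD : ∀ p ∈ HP, |g p| ≤ D * maj m β p) :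
    IntegrableOn (fun p => f p * g p * p.1) HP := by
  refine (((integrableOn_kernel hm).add (integrableOn_weight hβ)).const_mul (2 * (C * D))).mono'
    (Measurable.aestronglyMeasurable (by fun_prop)) ?_
  filter_upwards [ae_restrict_mem measurableSet_HP] with p hp
  have h1 := hfC p hp
  have h2 := hgD p hp
  have hp : 0 < p.1 := hp
  have hr := rr_pos hp
  have hs : 0 < sgm p := one_pos.trans_le (one_le_sgm p)
  have hmaj : 0 < maj m β p := by unfold maj; positivity
  have hC : 0 ≤ C := nonneg_of_mul_nonneg_left ((abs_nonneg _).trans h1) hmaj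
  have hD : 0 ≤ D := nonneg_of_mul_nonneg_left ((abs_nonneg _).trans h2) hmaj
  rw [Real.norm_eq_abs, abs_mul, abs_mul, abs_of_pos hp]
  calc |f p| * |g p| * p.1 ≤ (C * maj m β p) * (D * maj m β p) * p.1 := by gcongr
    _ = C * D * p.1 * (maj m β p) ^ 2 := by ring
    _ ≤ C * D * p.1 * (2 * ((rr p * (rr p + m))⁻¹ ^ 2 + (sgm p ^ (β - 1)) ^ 2)) := by
        have := add_sq_le (a := (rr p * (rr p + m))⁻¹) (b := sgm p ^ (β - 1))
        unfold maj; gcongr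
    _ = _ := by simp only [Pi.add_apply]; ring


/-! ### Gradient estimates for extreme Kerr data -/

lemma rr_lineDeriv {p : ℝ × ℝ} (hp : 0 < p.1) (e : ℝ × ℝ) :
    HasLineDerivAt ℝ rr ((p.1 * e.1 + p.2 * e.2) / rr p) p e := by
  have hr := rr_pos hp
  have h1 : HasDerivAt (fun τ : ℝ => (p.1 + τ * e.1) ^ 2 + (p.2 + τ * e.2) ^ 2)
      (2 * (p.1 * e.1 + p.2 * e.2)) 0 := by
    have := ((((hasDerivAt_id (0 : ℝ)).mul_const e.1).const_add p.1).pow 2).add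
      ((((hasDerivAt_id (0 : ℝ)).mul_const e.2).const_add p.2).pow 2)
    refine HasDerivAt.congr_deriv this ?_
    simp; ring
  have h2 := h1.sqrt (by
    have : 0 < p.1 ^ 2 + p.2 ^ 2 := by positivity
    simpa using this.ne')
  refine HasDerivAt.congr_deriv (f := fun τ : ℝ => rr (p + τ • e)) h2 ?_
  simp only [zero_mul, add_zero]
  unfold rr
  field_simp

lemma fst_lineDeriv (p e : ℝ × ℝ) : HasLineDerivAt ℝ (fun q : ℝ × ℝ => q.1) e.1 p e := by
  have := ((hasDerivAt_id (0 : ℝ)).mul_const e.1).const_add p.1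
  exact HasDerivAt.congr_deriv this (by simp)

lemma snd_lineDeriv (p e : ℝ × ℝ) : HasLineDerivAt ℝ (fun q : ℝ × ℝ => q.2) e.2 p e := by
  have := ((hasDerivAt_id (0 : ℝ)).mul_const e.2).const_add p.2
  exact HasDerivAt.congr_deriv this (by simp)

lemma differentiableAt_rr {p : ℝ × ℝ} (hp : 0 < p.1) : DifferentiableAt ℝ rr p := by
  unfold rr
  refine DifferentiableAt.sqrt (by fun_prop) ?_
  positivity

/-- The numerator of `e ^ v₀`. -/
def kN (m : ℝ) (p : ℝ × ℝ) : ℝ := ((rr p + m) ^ 2 + m ^ 2) ^ 2 - m ^ 2 * p.1 ^ 2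

/-- The denominator of `e ^ v₀`, that is `r² Σ`. -/
def kS (m : ℝ) (p : ℝ × ℝ) : ℝ := rr p ^ 2 * (rr p + m) ^ 2 + m ^ 2 * p.2 ^ 2

lemma pow_four_le_kN {m : ℝ} (hm : 0 < m) (p : ℝ × ℝ) : (rr p + m) ^ 4 ≤ kN m p := by
  have hr := rr_nonneg p
  have : p.1 ^ 2 ≤ (rr p + m) ^ 2 := by nlinarith [rr_sq p, sq_nonneg p.2]
  unfold kN
  nlinarith [mul_le_mul_of_nonneg_left this (sq_nonneg m), sq_nonneg (m ^ 2), sq_nonneg (m * (rr p + m))]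

lemma le_kS (m : ℝ) (p : ℝ × ℝ) : rr p ^ 2 * (rr p + m) ^ 2 ≤ kS m p := by
  unfold kS
  have := mul_nonneg (sq_nonneg m) (sq_nonneg p.2)
  linarith

lemma kS_pos {m : ℝ} (hm : 0 < m) {p : ℝ × ℝ} (hp : 0 < p.1) : 0 < kS m p := by
  have := rr_pos hp
  exact lt_of_lt_of_le (by positivity) (le_kS m p)

lemma kN_pos {m : ℝ} (hm : 0 < m) (p : ℝ × ℝ) : 0 < kN m p := by
  have := rr_nonneg p
  exact lt_of_lt_of_le (by positivity) (pow_four_le_kN hm p)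

lemma Sg_eq {J : ℝ} {p : ℝ × ℝ} (hp : 0 < p.1) :
    Sg J p = kS (√|J|) p / rr p ^ 2 := by
  have := rr_pos hp
  unfold Sg kS rt cosT
  rw [Real.sq_sqrt (abs_nonneg J)]
  field_simp

lemma X0_eq {J : ℝ} {p : ℝ × ℝ} (hp : 0 < p.1) :
    X0 J p = kN (√|J|) p / kS (√|J|) p * p.1 ^ 2 := by
  have hr := rr_pos hp
  unfold X0
  rw [Sg_eq hp]
  unfold kN rt sin2T
  rw [Real.sq_sqrt (abs_nonneg J)]
  field_simp

lemma X0_pos {J : ℝ} (hJ : J ≠ 0) {p : ℝ × ℝ} (hp : 0 < p.1) : 0 < X0 J p := by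
  have hm : 0 < √|J| := Real.sqrt_pos.2 (abs_pos.2 hJ)
  have := kN_pos hm p
  have := kS_pos hm hp
  rw [X0_eq hp]
  positivity

/-- The logarithmic singularity of `X₀` on the axis cancels in `v₀`. -/
lemma v0_eq {J : ℝ} (hJ : J ≠ 0) {p : ℝ × ℝ} (hp : 0 < p.1) :
    v0 J p = Real.log (kN (√|J|) p) - Real.log (kS (√|J|) p) := by
  have hm : 0 < √|J| := Real.sqrt_pos.2 (abs_pos.2 hJ)
  have h1 := kN_pos hm p
  have h2 := kS_pos hm hp
  unfold v0
  rw [X0_eq hp, Real.log_mul (by positivity) (by positivity), Real.log_div h1.ne' h2.ne',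
    Real.log_pow]
  push_cast; ring

lemma exp_v0 {J : ℝ} (hJ : J ≠ 0) {p : ℝ × ℝ} (hp : 0 < p.1) :
    Real.exp (v0 J p) = X0 J p / p.1 ^ 2 := by
  unfold v0
  rw [Real.exp_sub, Real.exp_log (X0_pos hJ hp), two_mul, Real.exp_add, Real.exp_log hp, sq]

/-- The lower bound `X₀ ≥ (r + √|J|)² sin²θ / 2`. -/
lemma X0_lower {J : ℝ} (hJ : J ≠ 0) {p : ℝ × ℝ} (hp : 0 < p.1) :
    (rr p + √|J|) ^ 2 * (p.1 / rr p) ^ 2 / 2 ≤ X0 J p := by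
  have hm : 0 < √|J| := Real.sqrt_pos.2 (abs_pos.2 hJ)
  set m := √|J| with hmdef
  have hr := rr_pos hp
  have h0 := (kN_pos hm p).le
  have h1 := pow_four_le_kN hm p
  have h2 := kS_pos hm hp
  have h3 : kS m p ≤ 2 * rr p ^ 2 * (rr p + m) ^ 2 := by
    have a : p.2 ^ 2 ≤ rr p ^ 2 := by nlinarith [rr_sq p]
    have b : m ^ 2 ≤ (rr p + m) ^ 2 := by gcongr; linarith
    have : m ^ 2 * p.2 ^ 2 ≤ (rr p + m) ^ 2 * rr p ^ 2 := by gcongr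
    unfold kS; linarith
  rw [X0_eq hp, ← hmdef]
  calc (rr p + m) ^ 2 * (p.1 / rr p) ^ 2 / 2
      = (rr p + m) ^ 4 / (2 * rr p ^ 2 * (rr p + m) ^ 2) * p.1 ^ 2 := by field_simp
    _ ≤ _ := by gcongr

lemma differentiableAt_v0 {J : ℝ} (hJ : J ≠ 0) {p : ℝ × ℝ} (hp : 0 < p.1) :
    DifferentiableAt ℝ (v0 J) p := by
  have hm : 0 < √|J| := Real.sqrt_pos.2 (abs_pos.2 hJ)
  have hev : v0 J =ᶠ[nhds p] fun q => Real.log (kN (√|J|) q) - Real.log (kS (√|J|) q) := by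
    filter_upwards [(isOpen_lt continuous_const continuous_fst).mem_nhds hp] with q hq
    exact v0_eq hJ hq
  rw [hev.differentiableAt_iff]
  have hr := differentiableAt_rr hp
  have h1 := (kN_pos hm p).ne'
  have h2 := (kS_pos hm hp).ne'
  have h3 : DifferentiableAt ℝ (kN (√|J|)) p := by unfold kN; fun_prop
  have h4 : DifferentiableAt ℝ (kS (√|J|)) p := by unfold kS; fun_prop
  exact (h3.log h1).sub (h4.log h2)

lemma abs_radial_le {p : ℝ × ℝ} (hp : 0 < p.1) {e : ℝ × ℝ} (he : e.1 ^ 2 + e.2 ^ 2 = 1) :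
    |(p.1 * e.1 + p.2 * e.2) / rr p| ≤ 1 := by
  have hr := rr_pos hp
  rw [abs_div, abs_of_pos hr, div_le_one hr]
  apply Real.abs_le_sqrt
  nlinarith [sq_nonneg (p.1 * e.2 - p.2 * e.1)]

/-- Estimate of a directional derivative of `v₀ = log N - log S`, where `N = kN` and `S = kS`. Here
`R = r + m`, `(x, y)` is the direction and `δ` the derivative of `r`. Separately the two logarithmic
derivatives behave like `4δ/R` and `2δ/r + 2δ/R`, which decay only like `1/r`; their difference is
`-2mδ/(rR)`, and the remaining terms are bounded directly. -/
lemma abs_logDeriv_kerr_le {m r R ρ z δ x y N S : ℝ} (hm : 0 < m) (hr : 0 < r) (hR : R = r + m)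
    (hρ : |ρ| ≤ r) (hz : |z| ≤ r) (hδ : |δ| ≤ 1) (hx : |x| ≤ 1) (hy : |y| ≤ 1)
    (hN : N = (R ^ 2 + m ^ 2) ^ 2 - m ^ 2 * ρ ^ 2) (hS : S = r ^ 2 * R ^ 2 + m ^ 2 * z ^ 2)
    (hN4 : R ^ 4 ≤ N) :
    |(4 * (R ^ 2 + m ^ 2) * R * δ - 2 * m ^ 2 * ρ * x) / N -
      (2 * r * R ^ 2 * δ + 2 * r ^ 2 * R * δ + 2 * m ^ 2 * z * y) / S| ≤ 18 * m * (r * R)⁻¹ := by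
  have hRp : 0 < R := by linarith
  have hmR : m ≤ R := by linarith
  have hrR : r ≤ R := by linarith
  have hNp : 0 < N := lt_of_lt_of_le (by positivity) hN4
  have hS4 : r ^ 2 * R ^ 2 ≤ S := by rw [hS]; nlinarith [mul_nonneg (sq_nonneg m) (sq_nonneg z)]
  have hSp : 0 < S := lt_of_lt_of_le (by positivity) hS4
  have hρ2 : ρ ^ 2 ≤ r ^ 2 := sq_le_sq' (abs_le.1 hρ).1 (abs_le.1 hρ).2
  have hz2 : z ^ 2 ≤ r ^ 2 := sq_le_sq' (abs_le.1 hz).1 (abs_le.1 hz).2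
  have hr2 : r ^ 2 ≤ R ^ 2 := by gcongr
  have hm2 : m ^ 2 ≤ R ^ 2 := by gcongr
  have e : (4 * (R ^ 2 + m ^ 2) * R * δ - 2 * m ^ 2 * ρ * x) / N -
      (2 * r * R ^ 2 * δ + 2 * r ^ 2 * R * δ + 2 * m ^ 2 * z * y) / S =
      ((-4 * m ^ 2 * (R ^ 2 + m ^ 2) + 4 * m ^ 2 * ρ ^ 2) * δ - 2 * m ^ 2 * ρ * R * x) / (R * N) -
      (2 * m ^ 2 * z * y - m ^ 2 * z ^ 2 * (2 / r + 2 / R) * δ) / S - 2 * m / (r * R) * δ := by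
    have e1 : (4 * (R ^ 2 + m ^ 2) * R * δ - 2 * m ^ 2 * ρ * x) / N = 4 * δ / R +
        ((-4 * m ^ 2 * (R ^ 2 + m ^ 2) + 4 * m ^ 2 * ρ ^ 2) * δ - 2 * m ^ 2 * ρ * R * x) / (R * N) := by
      field_simp
      rw [hN]; ring
    have e2 : (2 * r * R ^ 2 * δ + 2 * r ^ 2 * R * δ + 2 * m ^ 2 * z * y) / S =
        (2 / r + 2 / R) * δ +
        (2 * m ^ 2 * z * y - m ^ 2 * z ^ 2 * (2 / r + 2 / R) * δ) / S := by
      field_simp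
      rw [hS]; ring
    have e3 : 2 * m / (r * R) * δ = 2 * δ / r - 2 * δ / R := by
      field_simp
      rw [hR]; ring
    rw [e1, e2, e3]; ring
  have b1 : |((-4 * m ^ 2 * (R ^ 2 + m ^ 2) + 4 * m ^ 2 * ρ ^ 2) * δ - 2 * m ^ 2 * ρ * R * x) / (R * N)|
      ≤ 10 * m * (r * R)⁻¹ := by
    have c1 : |(-4 * m ^ 2 * (R ^ 2 + m ^ 2) + 4 * m ^ 2 * ρ ^ 2) * δ| ≤ 8 * m ^ 2 * R ^ 2 := by
      rw [abs_mul]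
      have : |-4 * m ^ 2 * (R ^ 2 + m ^ 2) + 4 * m ^ 2 * ρ ^ 2| ≤ 8 * m ^ 2 * R ^ 2 := by
        have h1 : 0 ≤ m ^ 2 * (R ^ 2 - ρ ^ 2) := mul_nonneg (sq_nonneg m) (by linarith)
        have h2 : 0 ≤ m ^ 2 * (R ^ 2 - m ^ 2) := mul_nonneg (sq_nonneg m) (by linarith)
        have h3 := mul_nonneg (sq_nonneg m) (sq_nonneg ρ)
        have h4 := mul_nonneg (sq_nonneg m) (sq_nonneg m)
        have h5 := mul_nonneg (sq_nonneg m) (sq_nonneg R)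
        rw [abs_le]; constructor <;> nlinarith
      exact (mul_le_of_le_one_right (abs_nonneg _) hδ).trans this
    have c2 : |2 * m ^ 2 * ρ * R * x| ≤ 2 * m ^ 2 * R ^ 2 := by
      calc |2 * m ^ 2 * ρ * R * x| = 2 * m ^ 2 * |ρ| * R * |x| := by
            rw [abs_mul, abs_mul, abs_mul, abs_of_pos hRp, abs_of_pos (by positivity : 0 < 2 * m ^ 2)]
        _ ≤ 2 * m ^ 2 * R * R * 1 := by gcongr; linarith
        _ = _ := by ring
    rw [abs_div, abs_of_pos (by positivity : 0 < R * N)]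
    calc _ ≤ (10 * m ^ 2 * R ^ 2) / (R * R ^ 4) := by
          gcongr
          exact (abs_sub _ _).trans (by linarith)
      _ = 10 * m * (m * r / R ^ 2) * (r * R)⁻¹ := by field_simp
      _ ≤ 10 * m * 1 * (r * R)⁻¹ := by
          gcongr
          rw [div_le_one (by positivity)]
          nlinarith
      _ = _ := by ring
  have b2 : |(2 * m ^ 2 * z * y - m ^ 2 * z ^ 2 * (2 / r + 2 / R) * δ) / S| ≤ 6 * m * (r * R)⁻¹ := by
    have c1 : |2 * m ^ 2 * z * y| ≤ 2 * m ^ 2 * r := by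
      calc |2 * m ^ 2 * z * y| = 2 * m ^ 2 * |z| * |y| := by
            rw [abs_mul, abs_mul, abs_of_pos (by positivity : 0 < 2 * m ^ 2)]
        _ ≤ 2 * m ^ 2 * r * 1 := by gcongr
        _ = _ := by ring
    have c2 : |m ^ 2 * z ^ 2 * (2 / r + 2 / R) * δ| ≤ 4 * m ^ 2 * r := by
      rw [abs_mul, abs_of_nonneg (by positivity : 0 ≤ m ^ 2 * z ^ 2 * (2 / r + 2 / R))]
      calc _ ≤ m ^ 2 * r ^ 2 * (2 / r + 2 / r) * 1 := by gcongr
        _ = _ := by field_simp; ring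
    rw [abs_div, abs_of_pos hSp]
    calc _ ≤ (6 * m ^ 2 * r) / (r ^ 2 * R ^ 2) := by
          gcongr
          exact (abs_sub _ _).trans (by linarith)
      _ = 6 * m * (m / R) * (r * R)⁻¹ := by field_simp
      _ ≤ 6 * m * 1 * (r * R)⁻¹ := by
          gcongr
          rw [div_le_one (by positivity)]
          exact hmR
      _ = _ := by ring
  have b3 : |2 * m / (r * R) * δ| ≤ 2 * m * (r * R)⁻¹ := by
    rw [abs_mul, abs_of_pos (by positivity : 0 < 2 * m / (r * R)), div_eq_mul_inv]
    exact mul_le_of_le_one_right (by positivity) hδ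
  rw [e]
  refine (abs_sub _ _).trans ?_
  have := abs_sub (((-4 * m ^ 2 * (R ^ 2 + m ^ 2) + 4 * m ^ 2 * ρ ^ 2) * δ - 2 * m ^ 2 * ρ * R * x) / (R * N))
    ((2 * m ^ 2 * z * y - m ^ 2 * z ^ 2 * (2 / r + 2 / R) * δ) / S)
  linarith

/-- The bound `|∂v₀| = O(r⁻¹ (r + √|J|)⁻¹)`. -/
lemma abs_fderiv_v0_le {J : ℝ} (hJ : J ≠ 0) {p : ℝ × ℝ} (hp : 0 < p.1) {e : ℝ × ℝ}
    (he : e.1 ^ 2 + e.2 ^ 2 = 1) :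
    |fderiv ℝ (v0 J) p e| ≤ 18 * √|J| * (rr p * (rr p + √|J|))⁻¹ := by
  have hm : 0 < √|J| := Real.sqrt_pos.2 (abs_pos.2 hJ)
  set m := √|J| with hmdef
  have hr := rr_pos hp
  set δ := (p.1 * e.1 + p.2 * e.2) / rr p with hδ
  have h1 : HasLineDerivAt ℝ (kN m)
      (4 * ((rr p + m) ^ 2 + m ^ 2) * (rr p + m) * δ - 2 * m ^ 2 * p.1 * e.1) p e := by
    have := (((((rr_lineDeriv hp e).add_const m).pow 2).add_const (m ^ 2)).pow 2).sub
      (((fst_lineDeriv p e).pow 2).const_mul (m ^ 2))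
    refine HasDerivAt.congr_deriv this ?_
    simp [← hδ]; ring
  have h2 : HasLineDerivAt ℝ (kS m)
      (2 * rr p * (rr p + m) ^ 2 * δ + 2 * rr p ^ 2 * (rr p + m) * δ + 2 * m ^ 2 * p.2 * e.2) p e := by
    have := (((rr_lineDeriv hp e).pow 2).mul (((rr_lineDeriv hp e).add_const m).pow 2)).add
      (((snd_lineDeriv p e).pow 2).const_mul (m ^ 2))
    refine HasDerivAt.congr_deriv this ?_
    simp [← hδ]; ring
  have h3 : HasLineDerivAt ℝ (fun q => Real.log (kN m q) - Real.log (kS m q)) _ p e :=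
    (HasDerivAt.log h1 (by simpa using (kN_pos hm p).ne')).sub
      (HasDerivAt.log h2 (by simpa using (kS_pos hm hp).ne'))
  have hev : v0 J =ᶠ[nhds p] fun q => Real.log (kN m q) - Real.log (kS m q) := by
    filter_upwards [(isOpen_lt continuous_const continuous_fst).mem_nhds hp] with q hq
    exact v0_eq hJ hq
  rw [← (differentiableAt_v0 hJ hp).lineDeriv_eq_fderiv, hev.lineDeriv_eq, h3.lineDeriv]
  simp only [zero_smul, add_zero]
  have hx : |e.1| ≤ 1 := by rw [← sq_le_one_iff_abs_le_one]; nlinarith [sq_nonneg e.2]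
  have hy : |e.2| ≤ 1 := by rw [← sq_le_one_iff_abs_le_one]; nlinarith [sq_nonneg e.1]
  exact abs_logDeriv_kerr_le hm hr rfl (abs_fst_le_rr p) (abs_snd_le_rr p) (abs_radial_le hp he)
    hx hy rfl rfl (pow_four_le_kN hm p)

lemma sin2T_eq {p : ℝ × ℝ} (hp : 0 < p.1) : sin2T p = 1 - cosT p ^ 2 := by
  have hr := rr_pos hp
  have := rr_sq p
  unfold sin2T cosT
  field_simp
  linarith

lemma differentiableAt_cosT {p : ℝ × ℝ} (hp : 0 < p.1) : DifferentiableAt ℝ cosT p := by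
  have hr := differentiableAt_rr hp
  have hr0 := (rr_pos hp).ne'
  unfold cosT
  fun_prop (disch := assumption)

/-- The derivative of `cos θ` carries a factor `sin θ = ρ / r`. -/
lemma cosT_lineDeriv {p : ℝ × ℝ} (hp : 0 < p.1) (e : ℝ × ℝ) :
    HasLineDerivAt ℝ cosT (p.1 * (p.1 * e.2 - p.2 * e.1) / rr p ^ 3) p e := by
  have hr := rr_pos hp
  have h := HasDerivAt.div (snd_lineDeriv p e) (rr_lineDeriv hp e) (by simpa using hr.ne')
  refine HasDerivAt.congr_deriv h ?_
  simp only [zero_smul, add_zero]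
  field_simp
  rw [rr_sq]; ring

lemma abs_cosT_deriv_le {p : ℝ × ℝ} (hp : 0 < p.1) {e : ℝ × ℝ} (he : e.1 ^ 2 + e.2 ^ 2 = 1) :
    |p.1 * (p.1 * e.2 - p.2 * e.1) / rr p ^ 3| ≤ (p.1 / rr p) / rr p := by
  have hr := rr_pos hp
  have h : |p.1 * e.2 - p.2 * e.1| ≤ rr p := by
    apply Real.abs_le_sqrt
    nlinarith [sq_nonneg (p.1 * e.1 + p.2 * e.2)]
  rw [abs_div, abs_mul, abs_of_pos hp, abs_of_pos (by positivity : 0 < rr p ^ 3)]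
  calc _ ≤ p.1 * rr p / rr p ^ 3 := by gcongr
    _ = _ := by field_simp

lemma Y0_eventuallyEq (J : ℝ) {p : ℝ × ℝ} (hp : 0 < p.1) :
    Y0 J =ᶠ[nhds p] fun q => 2 * J * (cosT q ^ 3 - 3 * cosT q) -
      2 * J ^ 2 * cosT q * (1 - cosT q ^ 2) ^ 2 /
        ((rr q + √|J|) ^ 2 + |J| * cosT q ^ 2) := by
  filter_upwards [(isOpen_lt continuous_const continuous_fst).mem_nhds hp] with q hq
  rw [← sin2T_eq hq]; rfl

lemma differentiableAt_Y0 {J : ℝ} (hJ : J ≠ 0) {p : ℝ × ℝ} (hp : 0 < p.1) :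
    DifferentiableAt ℝ (Y0 J) p := by
  rw [(Y0_eventuallyEq J hp).differentiableAt_iff]
  have hm : 0 < √|J| := Real.sqrt_pos.2 (abs_pos.2 hJ)
  have hr := rr_pos hp
  have h1 := differentiableAt_rr hp
  have h2 := differentiableAt_cosT hp
  have h3 : (rr p + √|J|) ^ 2 + |J| * cosT p ^ 2 ≠ 0 := by positivity
  fun_prop (disch := assumption)

/-- Estimate of a directional derivative of `Y₀`, with `c = cos θ`, `s = sin θ`, `T = Σ`, and `d`, `δ`
the derivatives of `cos θ` and `r`. Every term carries a factor `s³`, which more than compensates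
the `s²` in `X₀`. -/
lemma abs_kerr_Y_deriv_le {J m r R c s d δ T : ℝ} (hm : 0 < m) (hJ : |J| = m ^ 2) (hr : 0 < r)
    (hR : R = r + m) (hs : 0 ≤ s) (hsc : c ^ 2 + s ^ 2 = 1) (hd : |d| ≤ s / r) (hδ : |δ| ≤ 1)
    (hT : R ^ 2 ≤ T) :
    |(-6 * J * s ^ 2 - 2 * J ^ 2 * (s ^ 4 - 4 * c ^ 2 * s ^ 2) / T +
        4 * J ^ 2 * c ^ 2 * s ^ 4 * m ^ 2 / T ^ 2) * d + 4 * J ^ 2 * c * s ^ 4 * R * δ / T ^ 2| ≤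
      24 * m ^ 2 * s ^ 3 / r := by
  have hRp : 0 < R := by linarith
  have hT0 : 0 < T := lt_of_lt_of_le (by positivity) hT
  have hc2 : c ^ 2 ≤ 1 := by nlinarith [sq_nonneg s]
  have hs2 : s ^ 2 ≤ 1 := by nlinarith [sq_nonneg c]
  have hc1 : |c| ≤ 1 := (sq_le_one_iff_abs_le_one c).1 hc2
  have hs1 : s ≤ 1 := by nlinarith
  have hmT : m ^ 2 ≤ T := le_trans (by gcongr; linarith) hT
  have hJ2 : J ^ 2 = m ^ 4 := by rw [← sq_abs, hJ]; ring
  rw [hJ2]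
  have a1 : |-6 * J * s ^ 2| = 6 * m ^ 2 * s ^ 2 := by
    rw [abs_mul, abs_mul, hJ, abs_of_nonneg (sq_nonneg s)]; norm_num
  have a2 : |2 * m ^ 4 * (s ^ 4 - 4 * c ^ 2 * s ^ 2) / T| ≤ 10 * m ^ 2 * s ^ 2 := by
    rw [abs_div, abs_mul, abs_of_pos hT0, abs_of_pos (by positivity : 0 < 2 * m ^ 4)]
    have : |s ^ 4 - 4 * c ^ 2 * s ^ 2| ≤ 5 * s ^ 2 := by
      rw [abs_le]; constructor <;> nlinarith [mul_nonneg (sq_nonneg s) (sq_nonneg s),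
        mul_nonneg (sq_nonneg s) (sq_nonneg c), mul_nonneg (sq_nonneg s) (sub_nonneg.2 hs2),
        mul_nonneg (sq_nonneg s) (sub_nonneg.2 hc2)]
    calc _ ≤ 2 * m ^ 4 * (5 * s ^ 2) / m ^ 2 := by gcongr
      _ = _ := by field_simp; ring
  have a3 : |4 * m ^ 4 * c ^ 2 * s ^ 4 * m ^ 2 / T ^ 2| ≤ 4 * m ^ 2 * s ^ 2 := by
    rw [abs_of_nonneg (by positivity)]
    calc _ ≤ 4 * m ^ 4 * 1 * (s ^ 2 * 1) * m ^ 2 / (m ^ 2) ^ 2 := by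
          rw [show s ^ 4 = s ^ 2 * s ^ 2 by ring]
          gcongr
      _ = _ := by field_simp
  have a4 : |4 * m ^ 4 * c * s ^ 4 * R * δ / T ^ 2| ≤ 4 * m ^ 2 * s ^ 3 / r := by
    rw [abs_div, abs_of_pos (by positivity : 0 < T ^ 2)]
    have : |4 * m ^ 4 * c * s ^ 4 * R * δ| = 4 * m ^ 4 * |c| * s ^ 4 * R * |δ| := by
      simp only [abs_mul, abs_of_pos hRp, abs_of_nonneg (by positivity : 0 ≤ s ^ 4),
        abs_of_pos (by positivity : 0 < m ^ 4)]
      norm_num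
    rw [this]
    calc _ ≤ 4 * m ^ 4 * 1 * (s ^ 3 * 1) * R * 1 / (R ^ 2) ^ 2 := by
          rw [show s ^ 4 = s ^ 3 * s by ring]
          gcongr
      _ = 4 * m ^ 2 * s ^ 3 / r * (m ^ 2 * r / R ^ 3) := by field_simp
      _ ≤ 4 * m ^ 2 * s ^ 3 / r * 1 := by
          gcongr
          rw [div_le_one (by positivity), show R ^ 3 = R ^ 2 * R by ring]
          gcongr <;> linarith
      _ = _ := by ring
  refine (abs_add_le _ _).trans ?_
  rw [abs_mul]
  have a5 : |-6 * J * s ^ 2 - 2 * m ^ 4 * (s ^ 4 - 4 * c ^ 2 * s ^ 2) / T +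
        4 * m ^ 4 * c ^ 2 * s ^ 4 * m ^ 2 / T ^ 2| ≤ 20 * m ^ 2 * s ^ 2 := by
    refine (abs_add_le _ _).trans ?_
    have := abs_sub (-6 * J * s ^ 2) (2 * m ^ 4 * (s ^ 4 - 4 * c ^ 2 * s ^ 2) / T)
    linarith
  calc _ ≤ 20 * m ^ 2 * s ^ 2 * (s / r) + 4 * m ^ 2 * s ^ 3 / r := by gcongr
    _ = _ := by field_simp; ring

lemma abs_fderiv_Y0_le {J : ℝ} (hJ : J ≠ 0) {p : ℝ × ℝ} (hp : 0 < p.1) {e : ℝ × ℝ}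
    (he : e.1 ^ 2 + e.2 ^ 2 = 1) :
    |fderiv ℝ (Y0 J) p e| ≤ 24 * √|J| ^ 2 * (p.1 / rr p) ^ 3 / rr p := by
  have hm : 0 < √|J| := Real.sqrt_pos.2 (abs_pos.2 hJ)
  set m := √|J| with hmdef
  have hm2 : |J| = m ^ 2 := (Real.sq_sqrt (abs_nonneg J)).symm
  have hr := rr_pos hp
  have hT : (rr p + m) ^ 2 ≤ (rr p + m) ^ 2 + m ^ 2 * cosT p ^ 2 := by
    have : 0 ≤ m ^ 2 * cosT p ^ 2 := by positivity
    linarith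
  have hT0 : 0 < (rr p + m) ^ 2 + m ^ 2 * cosT p ^ 2 := by positivity
  have hsc : cosT p ^ 2 + (p.1 / rr p) ^ 2 = 1 := by
    have := sin2T_eq hp
    rw [div_pow]; unfold sin2T at this; linarith
  have hc := cosT_lineDeriv hp e
  have hrr := rr_lineDeriv hp e
  have hd := abs_cosT_deriv_le hp he
  have hδ := abs_radial_le hp he
  set d := p.1 * (p.1 * e.2 - p.2 * e.1) / rr p ^ 3
  set δ := (p.1 * e.1 + p.2 * e.2) / rr p
  have hs0 : 0 ≤ p.1 / rr p := by positivity
  set s := p.1 / rr p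
  have h := HasDerivAt.sub (((hc.pow 3).sub (hc.const_mul 3)).const_mul (2 * J))
    (HasDerivAt.div ((hc.const_mul (2 * J ^ 2)).mul (((hc.pow 2).const_sub 1).pow 2))
      (((hrr.add_const m).pow 2).add ((hc.pow 2).const_mul |J|))
      (by rw [hm2]; simpa using hT0.ne'))
  have h' : HasLineDerivAt ℝ (fun q => 2 * J * (cosT q ^ 3 - 3 * cosT q) -
      2 * J ^ 2 * cosT q * (1 - cosT q ^ 2) ^ 2 /
        ((rr q + m) ^ 2 + |J| * cosT q ^ 2)) _ p e := h
  rw [← (differentiableAt_Y0 hJ hp).lineDeriv_eq_fderiv, (Y0_eventuallyEq J hp).lineDeriv_eq,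
    h'.lineDeriv]
  have := abs_kerr_Y_deriv_le (J := J) hm hm2 hr rfl hs0 hsc hd hδ hT
  convert this using 2
  simp only [zero_smul, add_zero, Pi.add_apply, Pi.mul_apply, Pi.pow_apply]
  have hs2 : 1 - cosT p ^ 2 = s ^ 2 := by linarith
  rw [hm2, hs2]
  generalize cosT p = c at *
  have hc2 : c ^ 2 = 1 - s ^ 2 := by linarith
  set T := (rr p + m) ^ 2 + m ^ 2 * c ^ 2
  clear_value T
  simp only [Nat.add_one_sub_one, pow_one, Nat.cast_ofNat]
  field_simp
  linear_combination (6 * d * T ^ 2) * hsc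

/-- The bound `|∂Y₀| / X₀ = O(r⁻¹ (r + √|J|)⁻¹)`, uniformly up to the axis. -/
lemma abs_fderiv_Y0_div_le {J : ℝ} (hJ : J ≠ 0) {p : ℝ × ℝ} (hp : 0 < p.1) {e : ℝ × ℝ}
    (he : e.1 ^ 2 + e.2 ^ 2 = 1) :
    |(X0 J p)⁻¹ * fderiv ℝ (Y0 J) p e| ≤ 48 * √|J| * (rr p * (rr p + √|J|))⁻¹ := by
  have hm : 0 < √|J| := Real.sqrt_pos.2 (abs_pos.2 hJ)
  have h1 := abs_fderiv_Y0_le hJ hp he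
  have h2 := X0_lower hJ hp
  set m := √|J| with hmdef
  have hr := rr_pos hp
  have hX := X0_pos hJ hp
  have hs : p.1 / rr p ≤ 1 := (div_le_one hr).2 ((le_abs_self _).trans (abs_fst_le_rr p))
  have hs0 : 0 < p.1 / rr p := by positivity
  set s := p.1 / rr p
  rw [abs_mul, abs_of_pos (inv_pos.2 hX)]
  calc (X0 J p)⁻¹ * |fderiv ℝ (Y0 J) p e|
      ≤ ((rr p + m) ^ 2 * s ^ 2 / 2)⁻¹ * (24 * m ^ 2 * s ^ 3 / rr p) := by gcongr
    _ = 48 * m * (rr p * (rr p + m))⁻¹ * (m / (rr p + m) * s) := by field_simp; ring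
    _ ≤ 48 * m * (rr p * (rr p + m))⁻¹ * (1 * 1) := by
        gcongr
        rw [div_le_one (by positivity)]
        linarith
    _ = _ := by ring


/-! ### Gradient estimates for elements of 𝓑 -/

/-- The weighted `C¹` bound controls the function itself, since `β < 0`, and both components of its
gradient. -/
lemma abs_le_of_wFn_le {β C : ℝ} (hβ : β < -(1 / 2)) {f : ℝ × ℝ → ℝ} {p : ℝ × ℝ}
    (h : wFn β f p ≤ C) :
    |f p| ≤ C ∧ |pdR f p| ≤ C * sgm p ^ (β - 1) ∧ |pdZ f p| ≤ C * sgm p ^ (β - 1) := by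
  have hs1 := one_le_sgm p
  have hs : 0 < sgm p := one_pos.trans_le hs1
  have h1 : 0 ≤ sgm p ^ (-β) * |f p| := by positivity
  have h2 : 0 ≤ sgm p ^ (-β + 1) * √(gradSq f p) := by positivity
  unfold wFn at h
  have h3 : √(gradSq f p) ≤ C * sgm p ^ (β - 1) := by
    rw [show β - 1 = -(-β + 1) by ring, Real.rpow_neg hs.le, ← div_eq_mul_inv,
      le_div_iff₀ (by positivity)]
    linarith
  refine ⟨?_, ?_, ?_⟩
  · have h4 : 1 ≤ sgm p ^ (-β) := Real.one_le_rpow hs1 (by linarith)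
    have := mul_le_mul_of_nonneg_right h4 (abs_nonneg (f p))
    linarith
  · refine le_trans (Real.abs_le_sqrt ?_) h3
    unfold gradSq; linarith [sq_nonneg (pdZ f p)]
  · refine le_trans (Real.abs_le_sqrt ?_) h3
    unfold gradSq; linarith [sq_nonneg (pdR f p)]

lemma le_maj_right {m : ℝ} (hm : 0 < m) (β : ℝ) (p : ℝ × ℝ) : sgm p ^ (β - 1) ≤ maj m β p := by
  have := rr_nonneg p
  unfold maj
  have : 0 ≤ (rr p * (rr p + m))⁻¹ := by positivity
  linarith

lemma le_maj_left (m β : ℝ) (p : ℝ × ℝ) : (rr p * (rr p + m))⁻¹ ≤ maj m β p := by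
  have hs : 0 < sgm p := one_pos.trans_le (one_le_sgm p)
  have : 0 < sgm p ^ (β - 1) := by positivity
  unfold maj
  linarith

/-- The derivative of `y` vanishes on the closed cylinder `{ρ ≤ ρ₀}`: on its boundary this follows
from the continuity of the derivative. -/
lemma fderiv_eq_zero_of_le {ρ₀ : ℝ} {y : ℝ × ℝ → ℝ} (hy : ContDiff ℝ 1 y)
    (hy0 : ∀ p : ℝ × ℝ, p.1 ≤ ρ₀ → y p = 0) {p : ℝ × ℝ} (hp : p.1 ≤ ρ₀) : fderiv ℝ y p = 0 := by
  have hcl : IsClosed {q | fderiv ℝ y q = 0} :=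
    isClosed_eq (hy.continuous_fderiv one_ne_zero) continuous_const
  have hsub : Prod.fst ⁻¹' Set.Iio ρ₀ ⊆ {q : ℝ × ℝ | fderiv ℝ y q = 0} := by
    intro q hq
    have : y =ᶠ[nhds q] fun _ => 0 := by
      filter_upwards [(isOpen_Iio.preimage continuous_fst).mem_nhds hq] with x hx
      exact hy0 x (le_of_lt hx)
    show fderiv ℝ y q = 0
    rw [this.fderiv_eq]
    simp
  have hmem : p ∈ closure (Prod.fst ⁻¹' Set.Iio ρ₀) := by
    rw [← isOpenMap_fst.preimage_closure_eq_closure_preimage continuous_fst, closure_Iio]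
    exact hp
  exact closure_minimal hsub hcl hmem

/-- Away from the axis, `X₀` is bounded below. -/
lemma inv_X0_le {J ρ₀ : ℝ} (hJ : J ≠ 0) (hρ₀ : 0 < ρ₀) {p : ℝ × ℝ} (hp : ρ₀ < p.1) :
    (X0 J p)⁻¹ ≤ 2 / ρ₀ ^ 2 := by
  have hp0 : 0 < p.1 := hρ₀.trans hp
  have hm : 0 < √|J| := Real.sqrt_pos.2 (abs_pos.2 hJ)
  have hr := rr_pos hp0
  have h := X0_lower hJ hp0
  rw [inv_le_comm₀ (X0_pos hJ hp0) (by positivity), inv_div]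
  refine le_trans ?_ h
  gcongr
  calc ρ₀ ^ 2 ≤ p.1 ^ 2 := by gcongr
    _ = rr p ^ 2 * (p.1 / rr p) ^ 2 := by field_simp
    _ ≤ _ := by gcongr; linarith

/-- The bound `|∂y| / X₀ = O(σ^(β - 1))`: near the axis `∂y` vanishes, and elsewhere `X₀⁻¹` is
bounded. -/
lemma abs_inv_X0_mul_le {J ρ₀ β C : ℝ} (hJ : J ≠ 0) (hρ₀ : 0 < ρ₀) {y : ℝ × ℝ → ℝ}
    (hy : ContDiff ℝ 1 y) (hy0 : ∀ p : ℝ × ℝ, p.1 ≤ ρ₀ → y p = 0) (e : ℝ × ℝ)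
    (hC : ∀ p ∈ Om ρ₀, |fderiv ℝ y p e| ≤ C * sgm p ^ (β - 1)) {p : ℝ × ℝ} (hp : p ∈ HP) :
    |(X0 J p)⁻¹ * fderiv ℝ y p e| ≤ 2 / ρ₀ ^ 2 * |C| * maj (√|J|) β p := by
  have hp' : 0 < p.1 := hp
  have hm : 0 < √|J| := Real.sqrt_pos.2 (abs_pos.2 hJ)
  have hs : 0 < sgm p := one_pos.trans_le (one_le_sgm p)
  have hmaj := le_maj_right hm β p
  have hmaj0 : 0 ≤ maj (√|J|) β p := le_trans (by positivity) hmaj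
  rcases le_or_gt p.1 ρ₀ with h | h
  · rw [fderiv_eq_zero_of_le hy hy0 h]
    simp only [_root_.zero_apply, mul_zero, abs_zero]
    positivity
  · rw [abs_mul, abs_of_pos (inv_pos.2 (X0_pos hJ hp')), mul_assoc]
    have h1 := hC p h
    refine mul_le_mul (inv_X0_le hJ hρ₀ h) (h1.trans ?_) (abs_nonneg _) (by positivity)
    exact mul_le_mul (le_abs_self C) hmaj (by positivity) (abs_nonneg C)

/-! ### Expansion of the integrand -/

lemma fderiv_add_mul {f g : ℝ × ℝ → ℝ} {p : ℝ × ℝ} (hf : DifferentiableAt ℝ f p)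
    (hg : DifferentiableAt ℝ g p) (s : ℝ) (e : ℝ × ℝ) :
    fderiv ℝ (fun q => f q + s * g q) p e = fderiv ℝ f p e + s * fderiv ℝ g p e := by
  rw [fderiv_fun_add hf (hg.const_mul s), fderiv_const_mul hg]
  simp

lemma measurable_X0 (J : ℝ) : Measurable (X0 J) := by
  have := measurable_rr
  unfold X0 sin2T Sg rt cosT
  fun_prop

/-- The weight in the mass functional, written as a power of `X₀⁻¹` times the factor depending on
the perturbation. -/
lemma exp_weight {J : ℝ} (hJ : J ≠ 0) {p : ℝ × ℝ} (hp : 0 < p.1) (x : ℝ) :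
    (p.1 ^ 4)⁻¹ * Real.exp (-2 * (v0 J p + x)) = Real.exp (-2 * x) * ((X0 J p)⁻¹) ^ 2 := by
  have hX := X0_pos hJ hp
  have : Real.exp (-2 * (v0 J p + x)) = Real.exp (-2 * x) * ((Real.exp (v0 J p))⁻¹) ^ 2 := by
    rw [← Real.exp_neg, ← Real.exp_nat_mul, ← Real.exp_add]
    congr 1; push_cast; ring
  rw [this, exp_v0 hJ hp]
  field_simp

/-- The weight `X(t)⁻²`, in the same form as in `exp_weight`. -/
lemma exp_weight' {J : ℝ} (hJ : J ≠ 0) {p : ℝ × ℝ} (hp : 0 < p.1) (x : ℝ) :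
    ((p.1 ^ 2 * Real.exp (v0 J p + x)) ^ 2)⁻¹ = Real.exp (-2 * x) * ((X0 J p)⁻¹) ^ 2 := by
  have hX := X0_pos hJ hp
  rw [Real.exp_add, exp_v0 hJ hp, show -2 * x = -(x + x) by ring, Real.exp_neg, Real.exp_add]
  field_simp

/-- For fields of vectors `f`, `g` in the `(ρ, z)` plane, the density `f · g ρ`. -/
def dotρ (f₁ f₂ g₁ g₂ : ℝ × ℝ → ℝ) (p : ℝ × ℝ) : ℝ := f₁ p * g₁ p * p.1 + f₂ p * g₂ p * p.1


/-- Two integrals of the shape treated in `hasDerivAt_integral_exp_poly` are added under the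
integral sign. -/
lemma integral_exp_poly_add {α γ P Q R U V W : ℝ × ℝ → ℝ} {μ : Measure (ℝ × ℝ)} {C D : ℝ}
    (hα : Measurable α) (hC : ∀ᵐ p ∂μ, |α p| ≤ C) (hγ : Measurable γ) (hD : ∀ᵐ p ∂μ, |γ p| ≤ D)
    (hP : Integrable P μ) (hQ : Integrable Q μ) (hR : Integrable R μ)
    (hU : Integrable U μ) (hV : Integrable V μ) (hW : Integrable W μ) (t : ℝ) :
    (∫ p, Real.exp (-2 * t * α p) * (P p + t * Q p + t ^ 2 * R p) ∂μ) +
      (∫ p, Real.exp (-2 * t * γ p) * (U p + t * V p + t ^ 2 * W p) ∂μ) =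
    ∫ p, (Real.exp (-2 * t * α p) * (P p + t * Q p + t ^ 2 * R p) +
      Real.exp (-2 * t * γ p) * (U p + t * V p + t ^ 2 * W p)) ∂μ :=
  (integral_add
    (integrable_exp_mul hα hC ((hP.add (hQ.const_mul t)).add (hR.const_mul (t ^ 2))) t)
    (integrable_exp_mul hγ hD ((hU.add (hV.const_mul t)).add (hW.const_mul (t ^ 2))) t)).symm

/-! ### The second derivative of the mass functional -/

/-- For every φ = (α, y) ∈ 𝓑 and every t ∈ ℝ, the second derivative of i_φ
at t exists and equals
i''_φ(t) = (1/(16π)) ∫_{ℝ³} { |∂α|² + (2α²|∂Y(t)|² − 4α ∂Y(t)·∂y + |∂y|²) X(t)⁻² } dμ,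
where Y(t) = Y₀ + ty and X(t) = ρ² e^{v₀ + tα}. -/
theorem iF_second_derivative (J ρ₀ β : ℝ) (hJ : J ≠ 0) (hρ₀ : 0 < ρ₀) (hβ : β < -(1 / 2))
    (φ : Bsp ρ₀ β) (t : ℝ) :
    (∀ s : ℝ, DifferentiableAt ℝ (iF J ρ₀ β φ) s) ∧
    HasDerivAt (deriv (iF J ρ₀ β φ))
      ((1 / (16 * π)) * intR3 (fun p =>
        gradSq φ.a p +
          (2 * (φ.a p) ^ 2 * gradSq (fun q => Y0 J q + t * φ.y q) p -
              4 * φ.a p * gradDot (fun q => Y0 J q + t * φ.y q) φ.y p +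
              gradSq φ.y p) *
            ((p.1 ^ 2 * Real.exp (v0 J p + t * φ.a p)) ^ 2)⁻¹)) t := by
  have hm : 0 < √|J| := Real.sqrt_pos.2 (abs_pos.2 hJ)
  obtain ⟨Ca, hCa⟩ := φ.hba
  obtain ⟨Cy, hCy⟩ := φ.hby
  have hwa : ∀ p ∈ HP, wFn β φ.a p ≤ Ca := fun p hp => hCa (Set.mem_image_of_mem _ hp)
  have hwy : ∀ p ∈ Om ρ₀, wFn β φ.y p ≤ Cy := fun p hp => hCy (Set.mem_image_of_mem _ hp)
  have he1 : ((1, 0) : ℝ × ℝ).1 ^ 2 + ((1, 0) : ℝ × ℝ).2 ^ 2 = 1 := by norm_num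
  have he2 : ((0, 1) : ℝ × ℝ).1 ^ 2 + ((0, 1) : ℝ × ℝ).2 ^ 2 = 1 := by norm_num
  set μ : Measure (ℝ × ℝ) := volume.restrict HP with hμ
  have hCα : ∀ᵐ p ∂μ, |φ.a p| ≤ Ca := by
    filter_upwards [ae_restrict_mem measurableSet_HP] with p hp
    exact (abs_le_of_wFn_le hβ (hwa p hp)).1
  -- the part of the integrand without `Y` is treated as having the exponential factor `exp (-2 s Z)`
  -- with `Z = 0`; `Z` is kept opaque so that the two integrals have the same syntactic shape
  obtain ⟨Z, hZ⟩ : ∃ Z : ℝ × ℝ → ℝ, Z = fun _ => 0 := ⟨_, rfl⟩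
  have hC0 : ∀ᵐ p ∂μ, |Z p| ≤ 0 := by simp [hZ]
  have hαm : Measurable φ.a := φ.ha.continuous.measurable
  have h0m : Measurable Z := hZ ▸ measurable_const
  have hXm := measurable_X0 J
  -- the eight component fields, with `Y`-gradients measured in units of `X₀`
  set A₁ : ℝ × ℝ → ℝ := pdR (v0 J) with hA₁
  set A₂ : ℝ × ℝ → ℝ := pdZ (v0 J) with hA₂
  set a₁ : ℝ × ℝ → ℝ := pdR φ.a with ha₁
  set a₂ : ℝ × ℝ → ℝ := pdZ φ.a with ha₂
  set B₁ : ℝ × ℝ → ℝ := fun p => (X0 J p)⁻¹ * pdR (Y0 J) p with hB₁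
  set B₂ : ℝ × ℝ → ℝ := fun p => (X0 J p)⁻¹ * pdZ (Y0 J) p with hB₂
  set b₁ : ℝ × ℝ → ℝ := fun p => (X0 J p)⁻¹ * pdR φ.y p with hb₁
  set b₂ : ℝ × ℝ → ℝ := fun p => (X0 J p)⁻¹ * pdZ φ.y p with hb₂
  have mA₁ : Measurable A₁ := measurable_fderiv_apply_const ℝ (v0 J) _
  have mA₂ : Measurable A₂ := measurable_fderiv_apply_const ℝ (v0 J) _
  have ma₁ : Measurable a₁ := measurable_fderiv_apply_const ℝ φ.a _
  have ma₂ : Measurable a₂ := measurable_fderiv_apply_const ℝ φ.a _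
  have mB₁ : Measurable B₁ := hXm.inv.mul (measurable_fderiv_apply_const ℝ (Y0 J) _)
  have mB₂ : Measurable B₂ := hXm.inv.mul (measurable_fderiv_apply_const ℝ (Y0 J) _)
  have mb₁ : Measurable b₁ := hXm.inv.mul (measurable_fderiv_apply_const ℝ φ.y _)
  have mb₂ : Measurable b₂ := hXm.inv.mul (measurable_fderiv_apply_const ℝ φ.y _)
  have hlA : ∀ e : ℝ × ℝ, e.1 ^ 2 + e.2 ^ 2 = 1 → ∀ p ∈ HP,
      |fderiv ℝ (v0 J) p e| ≤ 18 * √|J| * maj (√|J|) β p := fun e he p hp =>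
    (abs_fderiv_v0_le hJ hp he).trans
      (mul_le_mul_of_nonneg_left (le_maj_left _ _ _) (by positivity))
  have hlB : ∀ e : ℝ × ℝ, e.1 ^ 2 + e.2 ^ 2 = 1 → ∀ p ∈ HP,
      |(X0 J p)⁻¹ * fderiv ℝ (Y0 J) p e| ≤ 48 * √|J| * maj (√|J|) β p := fun e he p hp =>
    (abs_fderiv_Y0_div_le hJ hp he).trans
      (mul_le_mul_of_nonneg_left (le_maj_left _ _ _) (by positivity))
  have hCa0 : ∀ p ∈ HP, 0 ≤ Ca := fun p hp =>
    (abs_nonneg _).trans (abs_le_of_wFn_le hβ (hwa p hp)).1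
  have la₁ : ∀ p ∈ HP, |a₁ p| ≤ Ca * maj (√|J|) β p := fun p hp =>
    (abs_le_of_wFn_le hβ (hwa p hp)).2.1.trans
      (mul_le_mul_of_nonneg_left (le_maj_right hm _ _) (hCa0 p hp))
  have la₂ : ∀ p ∈ HP, |a₂ p| ≤ Ca * maj (√|J|) β p := fun p hp =>
    (abs_le_of_wFn_le hβ (hwa p hp)).2.2.trans
      (mul_le_mul_of_nonneg_left (le_maj_right hm _ _) (hCa0 p hp))
  have lb₁ : ∀ p ∈ HP, |b₁ p| ≤ 2 / ρ₀ ^ 2 * |Cy| * maj (√|J|) β p := fun p hp =>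
    abs_inv_X0_mul_le hJ hρ₀ φ.hy φ.hy0 _
      (fun q hq => (abs_le_of_wFn_le hβ (hwy q hq)).2.1) hp
  have lb₂ : ∀ p ∈ HP, |b₂ p| ≤ 2 / ρ₀ ^ 2 * |Cy| * maj (√|J|) β p := fun p hp =>
    abs_inv_X0_mul_le hJ hρ₀ φ.hy φ.hy0 _
      (fun q hq => (abs_le_of_wFn_le hβ (hwy q hq)).2.2) hp
  have lA₁ := hlA _ he1
  have lA₂ := hlA _ he2
  have lB₁ := hlB _ he1
  have lB₂ := hlB _ he2
  -- `|∂v(s)|² ρ = P + s Q + s² R` and `|∂Y(s)|² X₀⁻² ρ = U + s V + s² W`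
  set P := dotρ A₁ A₂ A₁ A₂ with hP
  set Q : ℝ × ℝ → ℝ := fun p => 2 * dotρ A₁ A₂ a₁ a₂ p with hQ
  set R := dotρ a₁ a₂ a₁ a₂ with hR
  set U := dotρ B₁ B₂ B₁ B₂ with hU
  set V : ℝ × ℝ → ℝ := fun p => 2 * dotρ B₁ B₂ b₁ b₂ p with hV
  set W := dotρ b₁ b₂ b₁ b₂ with hW
  have iP : Integrable P μ := (integrableOn_mul_of_le hm hβ mA₁ mA₁ lA₁ lA₁).add
    (integrableOn_mul_of_le hm hβ mA₂ mA₂ lA₂ lA₂)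
  have iQ : Integrable Q μ := ((integrableOn_mul_of_le hm hβ mA₁ ma₁ lA₁ la₁).add
    (integrableOn_mul_of_le hm hβ mA₂ ma₂ lA₂ la₂)).const_mul 2
  have iR : Integrable R μ := (integrableOn_mul_of_le hm hβ ma₁ ma₁ la₁ la₁).add
    (integrableOn_mul_of_le hm hβ ma₂ ma₂ la₂ la₂)
  have iU : Integrable U μ := (integrableOn_mul_of_le hm hβ mB₁ mB₁ lB₁ lB₁).add
    (integrableOn_mul_of_le hm hβ mB₂ mB₂ lB₂ lB₂)
  have iV : Integrable V μ := ((integrableOn_mul_of_le hm hβ mB₁ mb₁ lB₁ lb₁).add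
    (integrableOn_mul_of_le hm hβ mB₂ mb₂ lB₂ lb₂)).const_mul 2
  have iW : Integrable W μ := (integrableOn_mul_of_le hm hβ mb₁ mb₁ lb₁ lb₁).add
    (integrableOn_mul_of_le hm hβ mb₂ mb₂ lb₂ lb₂)
  have iF_eq : iF J ρ₀ β φ = fun s => 1 / (32 * π) * (2 * π * (
      (∫ p, Real.exp (-2 * s * Z p) * (P p + s * Q p + s ^ 2 * R p) ∂μ) +
      ∫ p, Real.exp (-2 * s * φ.a p) * (U p + s * V p + s ^ 2 * W p) ∂μ)) := by
    funext s
    rw [integral_exp_poly_add h0m hC0 hαm hCα iP iQ iR iU iV iW s]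
    unfold iF MF intR3
    congr 2
    refine setIntegral_congr_fun measurableSet_HP fun p hp => ?_
    have hp' : 0 < p.1 := hp
    have dv := differentiableAt_v0 hJ hp'
    have dY := differentiableAt_Y0 hJ hp'
    have da : DifferentiableAt ℝ φ.a p := φ.ha.differentiable one_ne_zero p
    have dy : DifferentiableAt ℝ φ.y p := φ.hy.differentiable one_ne_zero p
    simp only [exp_weight hJ hp', gradSq, pdR, pdZ, fderiv_add_mul dv da, fderiv_add_mul dY dy]
    simp only [hZ, hP, hQ, hR, hU, hV, hW, dotρ, hA₁, hA₂, ha₁, ha₂, hB₁, hB₂, hb₁, hb₂, pdR, pdZ,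
      mul_zero, Real.exp_zero]
    rw [show -2 * (s * φ.a p) = -2 * s * φ.a p by ring]
    ring
  have D1 : ∀ s, HasDerivAt (iF J ρ₀ β φ) _ s := fun s => by
    rw [iF_eq]
    exact (((hasDerivAt_integral_exp_poly h0m hC0 iP iQ iR s).add
      (hasDerivAt_integral_exp_poly hαm hCα iU iV iW s)).const_mul (2 * π)).const_mul (1 / (32 * π))
  refine ⟨fun s => (D1 s).differentiableAt, ?_⟩
  rw [funext fun s => (D1 s).deriv]
  have iQ' : Integrable (fun p => -2 * Z p * P p + Q p) μ :=
    (integrable_mul_left h0m hC0 iP).add iQ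
  have iR' : Integrable (fun p => -2 * Z p * Q p + 2 * R p) μ :=
    (integrable_mul_left h0m hC0 iQ).add (iR.const_mul 2)
  have iS' := integrable_mul_left h0m hC0 iR
  have iV' : Integrable (fun p => -2 * φ.a p * U p + V p) μ :=
    (integrable_mul_left hαm hCα iU).add iV
  have iW' : Integrable (fun p => -2 * φ.a p * V p + 2 * W p) μ :=
    (integrable_mul_left hαm hCα iV).add (iW.const_mul 2)
  have iZ' := integrable_mul_left hαm hCα iW
  refine ((((hasDerivAt_integral_exp_poly h0m hC0 iQ' iR' iS' t).add
      (hasDerivAt_integral_exp_poly hαm hCα iV' iW' iZ' t)).const_mul (2 * π)).const_mul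
        (1 / (32 * π))).congr_deriv ?_
  have iQ'' : Integrable (fun p => -2 * Z p * (-2 * Z p * P p + Q p) + (-2 * Z p * Q p + 2 * R p)) μ :=
    (integrable_mul_left h0m hC0 iQ').add iR'
  have iR'' : Integrable (fun p => -2 * Z p * (-2 * Z p * Q p + 2 * R p) + 2 * (-2 * Z p * R p)) μ :=
    (integrable_mul_left h0m hC0 iR').add (iS'.const_mul 2)
  have iS'' := integrable_mul_left h0m hC0 iS'
  have iV'' : Integrable (fun p => -2 * φ.a p * (-2 * φ.a p * U p + V p) + (-2 * φ.a p * V p + 2 * W p)) μ :=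
    (integrable_mul_left hαm hCα iV').add iW'
  have iW'' : Integrable (fun p => -2 * φ.a p * (-2 * φ.a p * V p + 2 * W p) + 2 * (-2 * φ.a p * W p)) μ :=
    (integrable_mul_left hαm hCα iW').add (iZ'.const_mul 2)
  have iZ'' := integrable_mul_left hαm hCα iZ'
  rw [integral_exp_poly_add h0m hC0 hαm hCα iQ'' iR'' iS'' iV'' iW'' iZ'' t]
  unfold intR3
  rw [show (1 : ℝ) / (16 * π) = 1 / (32 * π) * 2 by ring, mul_assoc (1 / (32 * π)) 2,
    mul_left_comm 2 (2 * π)]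
  congr 2
  rw [← integral_const_mul]
  refine setIntegral_congr_fun measurableSet_HP fun p hp => ?_
  have hp' : 0 < p.1 := hp
  have dY := differentiableAt_Y0 hJ hp'
  have dy : DifferentiableAt ℝ φ.y p := φ.hy.differentiable one_ne_zero p
  simp only [exp_weight' hJ hp', gradSq, gradDot, pdR, pdZ, fderiv_add_mul dY dy]
  simp only [hZ, hP, hQ, hR, hU, hV, hW, dotρ, hA₁, hA₂, ha₁, ha₂, hB₁, hB₂, hb₁, hb₂, pdR, pdZ,
      mul_zero, Real.exp_zero]
  rw [show -2 * (t * φ.a p) = -2 * t * φ.a p by ring]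
  ring
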